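/- For every real A > 0 there exist constants C₁, C₂, N₀ > 0 such that for all real N ≥ N₀ and all integers r with 1 ≤ r ≤ A·log log N: C₁·(N/log N)·((1/2)·log log N)^{r−1}/(r−1)! ≤ |𝒟_r(N)| ≤ C₂·(N/log N)·((1/2)·log log N)^{r−1}/(r−1)!. -/

import Mathlib

/-- `𝒟`: squarefree positive integers all of whose prime divisors are `≡ 1, 2 (mod 4)`. -/
def PellD : Set ℕ :=
  {d | Squarefree d ∧ 0 < d ∧ ∀ p : ℕ, p.Prime → p ∣ d → p % 4 = 1 ∨ p % 4 = 2}

/-- `𝒟_r(N)`: elements of `𝒟` below `N` with exactly `r` distinct prime factors. -/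
def PellDr (r : ℕ) (N : ℝ) : Set ℕ :=
  {d ∈ PellD | (d : ℝ) < N ∧ d.primeFactors.card = r}

/-!
Let `P` be a set of primes with `∑_{p ∈ P, p < x} log p / p = κ log x + O(1)`. By partial summation
`∑_{p ∈ P, p < x} 1 / p = κ log log x + O(1)`, so the `k`-th elementary symmetric sum of these
reciprocals is `≪ (κ log log x) ^ k / k!` when `k = O(log log x)`.

For the upper bound, sum `log d` over the products `d < N` of `k + 1` primes of `P`. Splitting off
one prime and applying Chebyshev's bound to it gives `≪ N (κ log log N) ^ k / k!`, while each `d`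
not below `√N` contributes at least `log N / 2`.

For the lower bound, multiply a product `m ≤ N ^ (1 / 4)` of `k` primes by one large prime just
below `N / m`, for which there are `≫ N / (m log N)` choices. To bound `∑ 1 / m` from below, take
the `k` primes from a subset of `P` on which `∑ 1 / p ^ 2` and `∑ log p / p` are small: then few
`k`-fold products repeat a prime, and few exceed `N ^ (1 / 4)`.

The primes `≡ 1, 2 (mod 4)` qualify with `κ = 1 / 2`, because `∑_{n ≤ x} χ₄(n) Λ(n) / n` is
bounded: its product with the partial sum of `L(1, χ₄)`, which is at least `1 / 2` in absolute
value, differs from `∑_{n ≤ x} χ₄(n) log n / n` by a bounded amount.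
-/

section PartialSummation

open Finset

lemma abs_sum_range_mul_le {f b : ℕ → ℝ} {B : ℝ} (hf : Antitone f) (hf₀ : ∀ k, 0 ≤ f k)
    (hb : ∀ n, |∑ k ∈ range n, b k| ≤ B) (n : ℕ) :
    |∑ k ∈ range n, f k * b k| ≤ B * f 0 := by
  obtain _ | n := n
  · simpa using mul_nonneg ((abs_nonneg _).trans (hb 0)) (hf₀ 0)
  have hparts := sum_range_by_parts f b (n + 1)
  simp only [smul_eq_mul, Nat.add_sub_cancel] at hparts
  calc |∑ k ∈ range (n + 1), f k * b k|
      ≤ |f n * ∑ k ∈ range (n + 1), b k|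
        + ∑ k ∈ range n, |(f (k + 1) - f k) * ∑ j ∈ range (k + 1), b j| := by
        rw [hparts]
        exact (abs_sub _ _).trans (by gcongr; exact abs_sum_le_sum_abs _ _)
    _ ≤ f n * B + ∑ k ∈ range n, (f k - f (k + 1)) * B := by
        gcongr with k
        · rw [abs_mul, abs_of_nonneg (hf₀ n)]
          exact mul_le_mul_of_nonneg_left (hb _) (hf₀ n)
        · rw [abs_mul, abs_sub_comm, abs_of_nonneg (sub_nonneg.2 (hf k.le_succ))]
          exact mul_le_mul_of_nonneg_left (hb _) (sub_nonneg.2 (hf k.le_succ))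
    _ = B * f 0 := by rw [← sum_mul, sum_range_sub']; ring

lemma abs_sum_Ico_mul_le {f b : ℕ → ℝ} {B : ℝ} {m : ℕ} (hf : AntitoneOn f (Set.Ici m))
    (hf₀ : ∀ k, m ≤ k → 0 ≤ f k) (hb : ∀ n, |∑ k ∈ Ico m n, b k| ≤ B) (n : ℕ) :
    |∑ k ∈ Ico m n, f k * b k| ≤ B * f m := by
  rw [sum_Ico_eq_sum_range]
  refine abs_sum_range_mul_le (f := fun k ↦ f (m + k)) (b := fun k ↦ b (m + k))
    (fun i j hij ↦ hf (by simp) (by simp) (by lia)) (fun k ↦ hf₀ _ (by lia)) (fun l ↦ ?_) _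
  simpa [sum_Ico_eq_sum_range] using hb (m + l)

end PartialSummation

section VonMangoldtSums

open Finset Real
open scoped Nat ArithmeticFunction.vonMangoldt

lemma div_sub_one_lt_natCast_div (n d : ℕ) : (n : ℝ) / d - 1 < (n / d : ℕ) := by
  rw [← Nat.floor_div_eq_div (K := ℝ)]
  exact Nat.sub_one_lt_floor _

lemma sum_Ioc_log_eq_log_factorial (n : ℕ) : ∑ k ∈ Ioc 0 n, log k = log n ! := by
  induction n with
  | zero => simp
  | succ n ih =>
    rw [sum_Ioc_succ_top n.zero_le, ih, Nat.factorial_succ, Nat.cast_mul,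
      log_mul (by positivity) (by positivity), add_comm]

lemma sum_vonMangoldt_mul_div_eq_log_factorial (n : ℕ) :
    ∑ d ∈ Ioc 0 n, Λ d * (n / d : ℕ) = log n ! := by
  rw [← ArithmeticFunction.sum_Ioc_mul_zeta_eq_sum, ArithmeticFunction.vonMangoldt_mul_zeta,
    ← sum_Ioc_log_eq_log_factorial]
  rfl

lemma sum_vonMangoldt_le (n : ℕ) : ∑ d ∈ Ioc 0 n, Λ d ≤ (log 4 + 4) * n := by
  simpa [Chebyshev.psi] using Chebyshev.psi_le_const_mul_self n.cast_nonneg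

lemma abs_log_factorial_sub_le (n : ℕ) : |log n ! - n * log n| ≤ n := by
  obtain rfl | hn := n.eq_zero_or_pos
  · simp
  have hupper : log n ! ≤ n * log n := by
    rw [← log_pow]
    exact log_le_log (by positivity) (mod_cast n.factorial_le_pow)
  have hlower := Stirling.le_log_factorial_stirling hn.ne'
  have hpi : 0 ≤ log (2 * π) := log_nonneg (by linarith [pi_gt_three])
  rw [abs_le]
  constructor <;> linarith [log_natCast_nonneg n]

lemma abs_sum_vonMangoldt_div_sub_log_le {n : ℕ} (hn : 0 < n) :
    |∑ d ∈ Ioc 0 n, Λ d / d - log n| ≤ log 4 + 5 := by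
  have hn' : (0 : ℝ) < n := mod_cast hn
  have hrounding : |n * ∑ d ∈ Ioc 0 n, Λ d / d - log n !| ≤ (log 4 + 4) * n := by
    rw [← sum_vonMangoldt_mul_div_eq_log_factorial, mul_sum, ← sum_sub_distrib]
    refine (abs_sum_le_sum_abs _ _).trans ((sum_le_sum fun d _ ↦ ?_).trans (sum_vonMangoldt_le n))
    have hlt := div_sub_one_lt_natCast_div n d
    have hle : ((n / d : ℕ) : ℝ) ≤ n / d := Nat.cast_div_le
    rw [show (n : ℝ) * (Λ d / d) - Λ d * (n / d : ℕ) = Λ d * (n / d - (n / d : ℕ)) by ring,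
      abs_mul, abs_of_nonneg ArithmeticFunction.vonMangoldt_nonneg, abs_of_nonneg (by linarith)]
    exact mul_le_of_le_one_right ArithmeticFunction.vonMangoldt_nonneg (by linarith)
  refine le_of_mul_le_mul_left ?_ hn'
  calc n * |∑ d ∈ Ioc 0 n, Λ d / d - log n|
      = |(n * ∑ d ∈ Ioc 0 n, Λ d / d - log n !) + (log n ! - n * log n)| := by
        rw [← abs_of_pos hn', ← abs_mul, abs_of_pos hn']; ring_nf
    _ ≤ (log 4 + 4) * n + n :=
        (abs_add_le _ _).trans (add_le_add hrounding (abs_log_factorial_sub_le n))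
    _ = n * (log 4 + 5) := by ring

end VonMangoldtSums

section CharacterSums

open Finset Real
open scoped ArithmeticFunction.vonMangoldt

variable {χ : ℕ →*₀ ℝ} {M : ℝ}

lemma abs_le_of_abs_sum_Ico_le {b : ℕ → ℝ} (hb : ∀ m n, |∑ k ∈ Ico m n, b k| ≤ M) (n : ℕ) :
    |b n| ≤ M := by
  simpa using hb n (n + 1)

lemma abs_sum_Ioc_div_le {b : ℕ → ℝ} (hb : ∀ m n, |∑ k ∈ Ico m n, b k| ≤ M) (k n : ℕ) :
    |∑ m ∈ Ioc k n, b m / m| ≤ M / (k + 1) := by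
  rw [← Ico_add_one_add_one_eq_Ioc]
  simp_rw [div_eq_inv_mul]
  have hanti : AntitoneOn (fun m : ℕ ↦ (m : ℝ)⁻¹) (Set.Ici (k + 1)) := fun i hi j _ hij ↦ by
    have : 0 < i := by have := Set.mem_Ici.1 hi; lia
    dsimp only
    gcongr
  simpa [mul_comm] using abs_sum_Ico_mul_le hanti (fun m _ ↦ by positivity) (hb (k + 1)) (n + 1)

lemma antitoneOn_log_div_natCast : AntitoneOn (fun m : ℕ ↦ log m / m) (Set.Ici 3) := by
  have hexp (m : ℕ) (hm : m ∈ Set.Ici 3) : exp 1 ≤ m :=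
    (exp_one_lt_d9.le.trans (by norm_num)).trans (Nat.cast_le.2 hm : ((3 : ℕ) : ℝ) ≤ m)
  exact fun i hi j hj hij ↦ log_div_self_antitoneOn (hexp i hi) (hexp j hj) (Nat.cast_le.2 hij)

lemma abs_sum_Ioc_mul_log_div_le {b : ℕ → ℝ} (hb : ∀ m n, |∑ k ∈ Ico m n, b k| ≤ M) (n : ℕ) :
    |∑ m ∈ Ioc 0 n, b m * log m / m| ≤ M := by
  have hM : 0 ≤ M := (abs_nonneg _).trans (hb 0 0)
  have hlog_two : log 2 ≤ 1 := by linarith [log_two_lt_d9]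
  have hlog_three : log 3 ≤ 3 / 2 := by linarith [log_three_lt_d9]
  have htail : |∑ m ∈ Ico 3 (n + 1), b m * log m / m| ≤ M * (log 3 / 3) := by
    have := abs_sum_Ico_mul_le antitoneOn_log_div_natCast
      (fun m _ ↦ div_nonneg (log_natCast_nonneg m) m.cast_nonneg) (hb 3) (n + 1)
    simpa only [mul_comm (log _ / _), mul_div_assoc, Nat.cast_ofNat] using this
  have htwo : |b 2 * log 2 / 2| ≤ M * (1 / 2) := by
    rw [mul_div_assoc, abs_mul, abs_of_nonneg (by positivity : 0 ≤ log 2 / 2)]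
    gcongr
    exact abs_le_of_abs_sum_Ico_le hb 2
  obtain rfl | rfl | hn : n = 0 ∨ n = 1 ∨ 2 ≤ n := by lia
  · simpa
  · simpa
  rw [← Ico_add_one_add_one_eq_Ioc, ← sum_Ico_consecutive _ (by lia : 0 + 1 ≤ 3) (by lia)]
  calc _ = |b 2 * log 2 / 2 + ∑ m ∈ Ico 3 (n + 1), b m * log m / m| := by
        simp [sum_Ico_succ_top]
    _ ≤ M * (1 / 2) + M * (log 3 / 3) := (abs_add_le _ _).trans (add_le_add htwo htail)
    _ ≤ M * (1 / 2) + M * ((3 / 2) / 3) := by gcongr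
    _ = M := by ring

lemma sum_mul_log_div_eq_sum_vonMangoldt_mul (χ : ℕ →*₀ ℝ) (n : ℕ) :
    ∑ m ∈ Ioc 0 n, χ m * log m / m =
      ∑ d ∈ Ioc 0 n, χ d * Λ d / d * ∑ m ∈ Ioc 0 (n / d), χ m / m := by
  let F : ArithmeticFunction ℝ := ⟨fun n ↦ χ n * Λ n / n, by simp⟩
  let G : ArithmeticFunction ℝ := ⟨fun n ↦ χ n / n, by simp⟩
  have hconv (m : ℕ) : (F * G) m = χ m * log m / m := by
    have hterm : ∀ x ∈ m.divisorsAntidiagonal, F x.1 * G x.2 = χ m / m * Λ x.1 := by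
      intro x hx
      simp only [F, G, ArithmeticFunction.coe_mk, ← (Nat.mem_divisorsAntidiagonal.1 hx).1,
        map_mul, Nat.cast_mul]
      rw [div_mul_div_comm]
      ring
    rw [ArithmeticFunction.mul_apply, sum_congr rfl hterm, ← mul_sum,
      Nat.sum_divisorsAntidiagonal (fun i _ ↦ Λ i), ArithmeticFunction.vonMangoldt_sum]
    ring
  simp_rw [← hconv]
  exact ArithmeticFunction.sum_Ioc_mul_eq_sum_sum F G n

lemma sum_Ioc_sub_sum_Ioc_div (b : ℕ → ℝ) (n d : ℕ) :
    ∑ m ∈ Ioc 0 n, b m - ∑ m ∈ Ioc 0 (n / d), b m = ∑ m ∈ Ioc (n / d) n, b m := by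
  rw [← sum_Ioc_consecutive _ (Nat.zero_le (n / d)) (n.div_le_self d), add_sub_cancel_left]

lemma abs_sum_vonMangoldt_mul_tail_le (hχ : ∀ m n, |∑ k ∈ Ico m n, χ k| ≤ M) {n : ℕ}
    (hn : 0 < n) :
    |∑ d ∈ Ioc 0 n, χ d * Λ d / d * ∑ m ∈ Ioc (n / d) n, χ m / m| ≤ M ^ 2 * (log 4 + 4) := by
  have : (0 : ℝ) < n := mod_cast hn
  have hM : 0 ≤ M := (abs_nonneg _).trans (hχ 0 0)
  have hterm : ∀ d ∈ Ioc 0 n,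
      |χ d * Λ d / d * ∑ m ∈ Ioc (n / d) n, χ m / m| ≤ M ^ 2 / n * Λ d := by
    intro d hd
    have hd' : (0 : ℝ) < d := mod_cast (mem_Ioc.1 hd).1
    have htail : |∑ m ∈ Ioc (n / d) n, χ m / m| ≤ M * (d / n) := by
      refine (abs_sum_Ioc_div_le hχ _ _).trans ?_
      rw [← inv_div (n : ℝ), ← div_eq_mul_inv]
      gcongr
      linarith [div_sub_one_lt_natCast_div n d]
    rw [abs_mul, abs_div, abs_mul, abs_of_nonneg ArithmeticFunction.vonMangoldt_nonneg,
      abs_of_pos hd']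
    calc |χ d| * Λ d / d * |∑ m ∈ Ioc (n / d) n, χ m / m| ≤ M * Λ d / d * (M * (d / n)) := by
          have : 0 ≤ Λ d := ArithmeticFunction.vonMangoldt_nonneg
          gcongr
          exact abs_le_of_abs_sum_Ico_le hχ d
      _ = M ^ 2 / n * Λ d := by field_simp
  calc _ ≤ ∑ d ∈ Ioc 0 n, M ^ 2 / n * Λ d := (abs_sum_le_sum_abs _ _).trans (sum_le_sum hterm)
    _ ≤ M ^ 2 / n * ((log 4 + 4) * n) := by
        rw [← mul_sum]
        gcongr
        exact sum_vonMangoldt_le n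
    _ = M ^ 2 * (log 4 + 4) := by field_simp

lemma abs_sum_mul_vonMangoldt_div_le (hχ : ∀ m n, |∑ k ∈ Ico m n, χ k| ≤ M) {c : ℝ} (hc : 0 < c)
    (hL : ∀ n, 0 < n → c ≤ |∑ m ∈ Ioc 0 n, χ m / m|) (n : ℕ) :
    |∑ d ∈ Ioc 0 n, χ d * Λ d / d| ≤ (M ^ 2 * (log 4 + 4) + M) / c := by
  have hM : 0 ≤ M := (abs_nonneg _).trans (hχ 0 0)
  obtain rfl | hn := n.eq_zero_or_pos
  · simp only [Ioc_self, sum_empty, abs_zero]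
    positivity
  have hsplit : (∑ d ∈ Ioc 0 n, χ d * Λ d / d) * ∑ m ∈ Ioc 0 n, χ m / m =
      ∑ d ∈ Ioc 0 n, χ d * Λ d / d * ∑ m ∈ Ioc (n / d) n, χ m / m
        + ∑ m ∈ Ioc 0 n, χ m * log m / m := by
    rw [sum_mul_log_div_eq_sum_vonMangoldt_mul, ← sum_add_distrib, sum_mul]
    refine sum_congr rfl fun d _ ↦ ?_
    rw [← sum_Ioc_sub_sum_Ioc_div _ n d]
    ring
  rw [le_div_iff₀ hc]
  calc _ ≤ |∑ d ∈ Ioc 0 n, χ d * Λ d / d| * |∑ m ∈ Ioc 0 n, χ m / m| := by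
        gcongr
        exact hL n hn
    _ ≤ M ^ 2 * (log 4 + 4) + M := by
        rw [← abs_mul, hsplit]
        exact (abs_add_le _ _).trans
          (add_le_add (abs_sum_vonMangoldt_mul_tail_le hχ hn) (abs_sum_Ioc_mul_log_div_le hχ n))

end CharacterSums

open Classical in
/-- The finite set of elements of `P` strictly below the real number `x`. -/
noncomputable def membersBelow (P : Set ℕ) (x : ℝ) : Finset ℕ :=
  {p ∈ Finset.range ⌈x⌉₊ | p ∈ P}

/-- `P` is a set of primes satisfying Mertens' first theorem with leading constant `κ`, i.e.
`∑_{p ∈ P, p < x} log p / p = κ log x + O(1)`. The counting theorem below uses nothing else about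
the primes it is applied to. -/
structure HasMertensDensity (P : Set ℕ) (κ : ℝ) : Prop where
  prime_of_mem : ∀ p ∈ P, p.Prime
  exists_bound : ∃ B : ℝ, ∀ x : ℝ, 1 < x →
    |∑ p ∈ membersBelow P x, Real.log p / p - κ * Real.log x| ≤ B

section MertensDensity

open Finset Real

variable {P : Set ℕ}

lemma mem_membersBelow {x : ℝ} {p : ℕ} : p ∈ membersBelow P x ↔ (p : ℝ) < x ∧ p ∈ P := by
  simp [membersBelow, Nat.lt_ceil]

lemma membersBelow_mono {x y : ℝ} (hxy : x ≤ y) : membersBelow P x ⊆ membersBelow P y :=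
  fun _ hp ↦ mem_membersBelow.2
    ⟨(mem_membersBelow.1 hp).1.trans_le hxy, (mem_membersBelow.1 hp).2⟩

lemma mem_membersBelow_sdiff {x y : ℝ} {p : ℕ} :
    p ∈ membersBelow P x \ membersBelow P y ↔ p ∈ P ∧ y ≤ p ∧ (p : ℝ) < x := by
  simp only [mem_sdiff, mem_membersBelow, not_and', not_lt]
  tauto

lemma membersBelow_natCeil (x : ℝ) : membersBelow P ⌈x⌉₊ = membersBelow P x := by
  simp [membersBelow]

lemma sum_membersBelow_natCast (hP : ∀ p ∈ P, p.Prime) (f : ℕ → ℝ) {m : ℕ} (hm : m ≤ 2) (n : ℕ) :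
    ∑ p ∈ membersBelow P n, f p = ∑ k ∈ Ico m n, P.indicator f k := by
  classical
  rw [sum_indicator_eq_sum_filter (Ico m n) (fun _ ↦ f) (fun _ ↦ P) fun k ↦ k]
  congr 1
  ext p
  have := fun hp ↦ hm.trans (hP p hp).two_le
  simp only [mem_membersBelow, Nat.cast_lt, mem_filter, mem_Ico]
  tauto

lemma HasMertensDensity.of_natCast {κ B : ℝ} (hP : ∀ p ∈ P, p.Prime)
    (hB : ∀ n : ℕ, 0 < n → |∑ p ∈ membersBelow P (n + 1), log p / p - κ * log n| ≤ B) :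
    HasMertensDensity P κ := by
  refine ⟨hP, B + |κ| * log 2, fun x hx ↦ ?_⟩
  obtain ⟨n, hn⟩ : ∃ n, ⌈x⌉₊ = n + 1 := Nat.exists_eq_add_one.2 (Nat.ceil_pos.2 (by linarith))
  have hn₀ : 0 < n := by
    have := (Nat.lt_ceil (n := 1)).2 (by simpa using hx)
    lia
  have hn₀' : (1 : ℝ) ≤ n := mod_cast hn₀
  have hlower : (n : ℝ) < x := Nat.lt_ceil.1 (by lia)
  have hupper : x ≤ 2 * n := by
    have : x ≤ (n + 1 : ℕ) := hn ▸ Nat.le_ceil x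
    push_cast at this
    linarith
  have hlog : |log n - log x| ≤ log 2 := by
    have h₁ : log n ≤ log x := log_le_log (by linarith) hlower.le
    have h₂ : log x ≤ log 2 + log n :=
      (log_le_log (by linarith) hupper).trans_eq (log_mul (by norm_num) (by linarith))
    rw [abs_le]
    constructor <;> linarith [log_pos one_lt_two]
  have hx_eq : membersBelow P x = membersBelow P (n + 1) := by
    rw [← membersBelow_natCeil, hn, Nat.cast_add_one]
  calc |∑ p ∈ membersBelow P x, log p / p - κ * log x|
      = |(∑ p ∈ membersBelow P (n + 1), log p / p - κ * log n) + κ * (log n - log x)| := by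
        rw [hx_eq]; ring_nf
    _ ≤ B + |κ| * log 2 := by
        refine (abs_add_le _ _).trans (add_le_add (hB n hn₀) ?_)
        rw [abs_mul]
        gcongr

end MertensDensity

/-- The primes that may divide an element of `PellD`: `2` and the primes `≡ 1 (mod 4)`. -/
def pellPrimes : Set ℕ := {p | p.Prime ∧ (p % 4 = 1 ∨ p % 4 = 2)}

/-- The nontrivial Dirichlet character modulo `4`, as a real-valued function on `ℕ`. -/
def charModFour : ℕ →*₀ ℝ where
  toFun n := ((ZMod.χ₄ n : ℤ) : ℝ)
  map_zero' := by simp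
  map_one' := by simp
  map_mul' m n := by push_cast; rw [map_mul, Int.cast_mul]

section PrimesModFour

open Finset Real
open scoped ArithmeticFunction.vonMangoldt

lemma charModFour_apply (n : ℕ) :
    charModFour n = if n % 4 = 1 then 1 else if n % 4 = 3 then -1 else 0 := by
  change ((ZMod.χ₄ n : ℤ) : ℝ) = _
  rw [ZMod.χ₄_nat_eq_if_mod_four]
  split_ifs <;> lia

lemma sum_range_charModFour (n : ℕ) :
    ∑ k ∈ range n, charModFour k = if n % 4 = 2 ∨ n % 4 = 3 then 1 else 0 := by
  induction n with
  | zero => simp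
  | succ n ih =>
    rw [sum_range_succ, ih, charModFour_apply]
    split_ifs <;> first | lia | norm_num

lemma abs_sum_Ico_charModFour_le (m n : ℕ) : |∑ k ∈ Ico m n, charModFour k| ≤ 1 := by
  obtain hmn | hmn := le_total m n
  · rw [sum_Ico_eq_sub _ hmn, sum_range_charModFour, sum_range_charModFour]
    split_ifs <;> norm_num
  · simp [Ico_eq_empty_of_le hmn]

lemma half_le_abs_sum_charModFour_div {n : ℕ} (hn : 0 < n) :
    1 / 2 ≤ |∑ m ∈ Ioc 0 n, charModFour m / m| := by
  have htail := abs_sum_Ioc_div_le abs_sum_Ico_charModFour_le 1 n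
  have hone : ∑ m ∈ Ioc 0 1, charModFour m / m = 1 := by simp
  rw [← sum_Ioc_consecutive _ zero_le_one hn, hone]
  norm_num at htail
  rw [abs_le] at htail
  exact le_abs.2 (.inl (by linarith))

lemma summable_vonMangoldt_div_not_prime :
    Summable fun n : ℕ ↦ if n.Prime then 0 else Λ n / n := by
  convert ArithmeticFunction.vonMangoldt.summable_residueClass_non_primes_div (q := 1) 0 using 2
    with n
  split_ifs
  · simp
  · rw [ArithmeticFunction.vonMangoldt.residueClass, Set.indicator_of_mem]
    exact Subsingleton.elim _ _

lemma two_mul_indicator_pellPrimes_of_odd {p : ℕ} (hp : p.Prime) (hodd : p % 2 = 1) :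
    2 * pellPrimes.indicator (fun k ↦ log k / k) p = (1 + charModFour p) * Λ p / p := by
  rw [ArithmeticFunction.vonMangoldt_apply_prime hp, charModFour_apply]
  obtain hmod | hmod : p % 4 = 1 ∨ p % 4 = 3 := by lia
  · have hmem : p ∈ pellPrimes := ⟨hp, .inl hmod⟩
    rw [Set.indicator_of_mem hmem, if_pos hmod]
    ring
  · have hmem : p ∉ pellPrimes := fun h ↦ by have := h.2; lia
    rw [Set.indicator_of_notMem hmem, if_neg (by lia), if_pos hmod]
    ring

lemma abs_two_mul_indicator_pellPrimes_sub_le (n : ℕ) :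
    |2 * pellPrimes.indicator (fun p ↦ log p / p) n - (1 + charModFour n) * Λ n / n| ≤
      2 * (if n.Prime then 0 else Λ n / n) + if n = 2 then log 2 else 0 := by
  by_cases hn : n.Prime
  · rw [if_pos hn, mul_zero, zero_add]
    obtain rfl | hodd := hn.eq_two_or_odd
    · have htwo : 2 ∈ pellPrimes := ⟨hn, .inr rfl⟩
      have hchi : charModFour 2 = 0 := by simp [charModFour_apply]
      rw [if_pos rfl, Set.indicator_of_mem htwo, ArithmeticFunction.vonMangoldt_apply_prime hn,
        hchi, Nat.cast_ofNat, abs_le]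
      constructor <;> linarith [log_pos one_lt_two]
    · rw [two_mul_indicator_pellPrimes_of_odd hn hodd, sub_self, abs_zero]
      split_ifs <;> positivity
  · have hchi := abs_le_of_abs_sum_Ico_le abs_sum_Ico_charModFour_le n
    have hΛ : 0 ≤ Λ n / n := div_nonneg ArithmeticFunction.vonMangoldt_nonneg n.cast_nonneg
    have hmem : n ∉ pellPrimes := fun h ↦ hn h.1
    have htwo : n ≠ 2 := fun h ↦ hn (h ▸ Nat.prime_two)
    rw [Set.indicator_of_notMem hmem, if_neg hn, if_neg htwo, mul_zero, zero_sub, abs_neg,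
      add_zero, mul_div_assoc, abs_mul, abs_of_nonneg hΛ]
    gcongr
    exact (abs_add_le _ _).trans (by rw [abs_one]; linarith)

lemma abs_two_mul_sum_pellPrimes_sub_le (n : ℕ) :
    |2 * ∑ p ∈ membersBelow pellPrimes (n + 1), log p / p
      - ∑ d ∈ Ioc 0 n, (1 + charModFour d) * Λ d / d| ≤
      2 * ∑' k : ℕ, (if k.Prime then 0 else Λ k / k) + log 2 := by
  have hnonneg (k : ℕ) : 0 ≤ if k.Prime then 0 else Λ k / k := by
    split_ifs
    · rfl
    · exact div_nonneg ArithmeticFunction.vonMangoldt_nonneg k.cast_nonneg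
  have htwo : ∑ k ∈ Ioc 0 n, (if k = 2 then log 2 else 0) ≤ log 2 := by
    rw [sum_ite_eq']
    split_ifs <;> linarith [log_pos one_lt_two]
  rw [← Nat.cast_add_one, sum_membersBelow_natCast (fun _ hp ↦ hp.1) (fun k ↦ log k / k)
    one_le_two, show Ico 1 (n + 1) = Ioc 0 n from Ico_add_one_add_one_eq_Ioc 0 n, mul_sum,
    ← sum_sub_distrib]
  calc _ ≤ ∑ k ∈ Ioc 0 n,
        (2 * (if k.Prime then 0 else Λ k / k) + if k = 2 then log 2 else 0) :=
        (abs_sum_le_sum_abs _ _).trans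
          (sum_le_sum fun k _ ↦ abs_two_mul_indicator_pellPrimes_sub_le k)
    _ ≤ _ := by
        rw [sum_add_distrib, ← mul_sum]
        gcongr
        exact summable_vonMangoldt_div_not_prime.sum_le_tsum _ fun k _ ↦ hnonneg k

lemma hasMertensDensity_pellPrimes : HasMertensDensity pellPrimes (1 / 2) := by
  refine .of_natCast (B := (2 * ∑' k : ℕ, (if k.Prime then 0 else Λ k / k) + log 2
    + (log 4 + 5) + (1 ^ 2 * (log 4 + 4) + 1) / (1 / 2)) / 2) (fun _ hp ↦ hp.1) fun n hn ↦ ?_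
  have hprimes := abs_le.1 (abs_two_mul_sum_pellPrimes_sub_le n)
  have hΛ := abs_le.1 (abs_sum_vonMangoldt_div_sub_log_le hn)
  have hχ := abs_le.1 (abs_sum_mul_vonMangoldt_div_le abs_sum_Ico_charModFour_le one_half_pos
    (fun _ ↦ half_le_abs_sum_charModFour_div) n)
  have hsum : ∑ d ∈ Ioc 0 n, (1 + charModFour d) * Λ d / d =
      ∑ d ∈ Ioc 0 n, Λ d / d + ∑ d ∈ Ioc 0 n, charModFour d * Λ d / d := by
    rw [← sum_add_distrib]
    exact sum_congr rfl fun _ _ ↦ by ring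
  rw [hsum] at hprimes
  rw [abs_le]
  constructor <;> linarith

end PrimesModFour

section MertensReciprocal

open Finset Real

variable {P : Set ℕ} {κ : ℝ}

lemma abs_sub_div_sub_log_sub_log_le {a b : ℝ} (ha : 0 < a) (hab : a ≤ b) (hba : b - a ≤ 1) :
    |a⁻¹ * (b - a) - (log b - log a)| ≤ a⁻¹ - b⁻¹ := by
  have hb : 0 < b := ha.trans_le hab
  have hupper := log_le_sub_one_of_pos (div_pos hb ha)
  have hlower := one_sub_inv_le_log_of_pos (div_pos hb ha)
  rw [log_div hb.ne' ha.ne'] at hupper hlower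
  have hupper_eq : b / a - 1 = a⁻¹ * (b - a) := by field_simp
  have hlower_eq : 1 - (b / a)⁻¹ = a⁻¹ * (b - a) - (a⁻¹ - b⁻¹) * (b - a) := by field_simp; ring
  have hprod : (a⁻¹ - b⁻¹) * (b - a) ≤ a⁻¹ - b⁻¹ :=
    mul_le_of_le_one_right (sub_nonneg.2 (inv_anti₀ ha hab)) hba
  rw [abs_of_nonneg (by linarith)]
  linarith

lemma log_add_one_sub_log_le_one {k : ℕ} (hk : 0 < k) : log (k + 1) - log k ≤ 1 := by
  have hk' : (1 : ℝ) ≤ k := mod_cast hk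
  have hk₀ : (0 : ℝ) < k := by linarith
  rw [← log_div (by positivity) hk₀.ne']
  refine (log_le_sub_one_of_pos (by positivity)).trans ?_
  rw [sub_le_iff_le_add, div_le_iff₀ hk₀]
  linarith

lemma abs_sum_log_diff_div_log_sub_le {n : ℕ} (hn : 2 ≤ n) :
    |∑ k ∈ Ico 2 n, (log k)⁻¹ * (log (k + 1) - log k) - (log (log n) - log (log 2))| ≤
      (log 2)⁻¹ := by
  have hloglog : log (log n) - log (log 2) =
      ∑ k ∈ Ico 2 n, (log (log (k + 1)) - log (log k)) := by
    simpa using (sum_Ico_sub (fun k : ℕ ↦ log (log k)) hn).symm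
  have hinv : (log 2)⁻¹ - (log n)⁻¹ = ∑ k ∈ Ico 2 n, ((log k)⁻¹ - (log (k + 1))⁻¹) := by
    rw [← neg_inj, neg_sub, ← sum_neg_distrib]
    simpa using (sum_Ico_sub (fun k : ℕ ↦ (log k)⁻¹) hn).symm
  rw [hloglog, ← sum_sub_distrib]
  calc _ ≤ ∑ k ∈ Ico 2 n, ((log k)⁻¹ - (log (k + 1))⁻¹) := by
        refine (abs_sum_le_sum_abs _ _).trans (sum_le_sum fun k hk ↦ ?_)
        have hk' : (2 : ℝ) ≤ k := mod_cast (mem_Ico.1 hk).1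
        exact abs_sub_div_sub_log_sub_log_le (log_pos (by linarith))
          (log_le_log (by linarith) (by linarith))
          (log_add_one_sub_log_le_one (by have := (mem_Ico.1 hk).1; lia))
    _ ≤ (log 2)⁻¹ := by
        rw [← hinv]
        exact sub_le_self _ (inv_nonneg.2 (log_natCast_nonneg n))

lemma HasMertensDensity.exists_bound_sum_Ico_indicator (h : HasMertensDensity P κ) :
    ∃ B : ℝ, ∀ n : ℕ, |∑ k ∈ Ico 2 n,
      (P.indicator (fun p ↦ log p / p) k - κ * (log (k + 1) - log k))| ≤ B := by
  obtain ⟨B, hB⟩ := h.exists_bound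
  have hB₀ : 0 ≤ B := (abs_nonneg _).trans (hB 2 one_lt_two)
  refine ⟨B + |κ| * log 2, fun n ↦ ?_⟩
  obtain hn | hn := lt_or_ge n 2
  · rw [Ico_eq_empty_of_le hn.le, sum_empty, abs_zero]
    positivity
  have htel : ∑ k ∈ Ico 2 n, (log (k + 1) - log k) = log n - log 2 := by
    simpa using sum_Ico_sub (fun k : ℕ ↦ log k) hn
  rw [sum_sub_distrib, ← sum_membersBelow_natCast h.prime_of_mem _ le_rfl, ← mul_sum, htel]
  calc _ = |(∑ p ∈ membersBelow P n, log p / p - κ * log n) + κ * log 2| := by ring_nf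
    _ ≤ B + |κ| * log 2 := by
        refine (abs_add_le _ _).trans (add_le_add (hB n (mod_cast hn)) ?_)
        rw [abs_mul, abs_of_pos (log_pos one_lt_two)]

lemma HasMertensDensity.exists_abs_sum_inv_sub_le_natCast (h : HasMertensDensity P κ) :
    ∃ D : ℝ, ∀ n : ℕ, 2 ≤ n →
      |∑ p ∈ membersBelow P n, (p : ℝ)⁻¹ - κ * log (log n)| ≤ D := by
  obtain ⟨B, hB⟩ := h.exists_bound_sum_Ico_indicator
  refine ⟨B * (log 2)⁻¹ + |κ| * ((log 2)⁻¹ + |log (log 2)|), fun n hn ↦ ?_⟩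
  have hlog {k : ℕ} (hk : 2 ≤ k) : 0 < log k := log_pos (mod_cast hk)
  have hweighted := abs_sum_Ico_mul_le (m := 2) (f := fun k : ℕ ↦ (log k)⁻¹)
    (fun i hi j _ hij ↦ inv_anti₀ (hlog hi)
      (log_le_log (Nat.cast_pos.2 (two_pos.trans_le hi)) (Nat.cast_le.2 hij)))
    (fun k hk ↦ inv_nonneg.2 (hlog hk).le) hB n
  have hsum : ∑ p ∈ membersBelow P n, (p : ℝ)⁻¹ =
      ∑ k ∈ Ico 2 n, (log k)⁻¹ * P.indicator (fun p ↦ log p / p) k := by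
    rw [sum_membersBelow_natCast h.prime_of_mem _ le_rfl]
    refine sum_congr rfl fun k hk ↦ ?_
    by_cases hkP : k ∈ P
    · have := (hlog (mem_Ico.1 hk).1).ne'
      rw [Set.indicator_of_mem hkP, Set.indicator_of_mem hkP]
      field_simp
    · rw [Set.indicator_of_notMem hkP, Set.indicator_of_notMem hkP, mul_zero]
  have hloglog : |∑ k ∈ Ico 2 n, (log k)⁻¹ * (log (k + 1) - log k) - log (log n)| ≤
      (log 2)⁻¹ + |log (log 2)| := by
    have htri := abs_sub_abs_le_abs_sub
      (∑ k ∈ Ico 2 n, (log k)⁻¹ * (log (k + 1) - log k) - log (log n)) (-log (log 2))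
    rw [abs_neg, sub_neg_eq_add, sub_add] at htri
    linarith [abs_sum_log_diff_div_log_sub_le hn]
  rw [hsum]
  calc _ = |∑ k ∈ Ico 2 n, (log k)⁻¹ *
          (P.indicator (fun p ↦ log p / p) k - κ * (log (k + 1) - log k))
        + κ * (∑ k ∈ Ico 2 n, (log k)⁻¹ * (log (k + 1) - log k) - log (log n))| := by
        rw [mul_sub, mul_sum, add_sub, ← sum_add_distrib]
        congr 2
        exact sum_congr rfl fun _ _ ↦ by ring
    _ ≤ B * (log 2)⁻¹ + |κ| * ((log 2)⁻¹ + |log (log 2)|) := by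
        refine (abs_add_le _ _).trans (add_le_add (by simpa using hweighted) ?_)
        rw [abs_mul]
        gcongr

lemma abs_log_log_natCeil_sub_le {x : ℝ} (hx : 2 ≤ x) :
    |log (log ⌈x⌉₊) - log (log x)| ≤ log 2 := by
  have hlog : 0 < log x := log_pos (by linarith)
  have hle : log x ≤ log ⌈x⌉₊ := log_le_log (by linarith) (Nat.le_ceil x)
  have hceil : (⌈x⌉₊ : ℝ) ≤ x ^ 2 := by nlinarith [Nat.ceil_lt_add_one (by linarith : 0 ≤ x)]
  have hge : log ⌈x⌉₊ ≤ 2 * log x := by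
    have hpos : (0 : ℝ) < ⌈x⌉₊ := Nat.cast_pos.2 (Nat.ceil_pos.2 (by linarith))
    simpa using log_le_log hpos hceil
  have hlower := log_le_log hlog hle
  have hupper := log_le_log (hlog.trans_le hle) hge
  rw [log_mul two_ne_zero hlog.ne'] at hupper
  rw [abs_of_nonneg (by linarith)]
  linarith

lemma HasMertensDensity.exists_abs_sum_inv_sub_le (h : HasMertensDensity P κ) :
    ∃ D : ℝ, ∀ x : ℝ, 2 ≤ x →
      |∑ p ∈ membersBelow P x, (p : ℝ)⁻¹ - κ * log (log x)| ≤ D := by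
  obtain ⟨D, hD⟩ := h.exists_abs_sum_inv_sub_le_natCast
  refine ⟨D + |κ| * log 2, fun x hx ↦ ?_⟩
  have hceil : 2 ≤ ⌈x⌉₊ := by exact_mod_cast hx.trans (Nat.le_ceil x)
  rw [← membersBelow_natCeil]
  calc _ = |(∑ p ∈ membersBelow P ⌈x⌉₊, (p : ℝ)⁻¹ - κ * log (log ⌈x⌉₊))
          + κ * (log (log ⌈x⌉₊) - log (log x))| := by ring_nf
    _ ≤ D + |κ| * log 2 := by
        refine (abs_add_le _ _).trans (add_le_add (hD _ hceil) ?_)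
        rw [abs_mul]
        gcongr
        exact abs_log_log_natCeil_sub_le hx

end MertensReciprocal

section ChebyshevLowerBound

open Finset Real

variable {P : Set ℕ} {κ : ℝ}

lemma HasMertensDensity.exists_le_card_sdiff (h : HasMertensDensity P κ) (hκ : 0 < κ) :
    ∃ K c x₀ : ℝ, 1 < K ∧ 0 < c ∧ 1 < x₀ ∧ ∀ x : ℝ, x₀ ≤ x →
      c * (x / log x) ≤ #(membersBelow P x \ membersBelow P (x / K)) := by
  obtain ⟨B, hB⟩ := h.exists_bound
  have hB₀ : 0 ≤ B := (abs_nonneg _).trans (hB 2 one_lt_two)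
  set K := exp ((2 * B + 1) / κ) with hKdef
  have hK : 1 < K := one_lt_exp_iff.2 (by positivity)
  refine ⟨K, K⁻¹, 2 * K, hK, by positivity, by linarith, fun x hx ↦ ?_⟩
  have hx₀ : 0 < x := by linarith
  have hlogx : 0 < log x := log_pos (by linarith)
  have hxK : 1 < x / K := by
    rw [lt_div_iff₀ (by linarith)]
    linarith
  have hmass : 1 ≤ ∑ p ∈ membersBelow P x \ membersBelow P (x / K), log p / p := by
    have hlog : log (x / K) = log x - (2 * B + 1) / κ := by
      rw [log_div hx₀.ne' (by positivity), hKdef, log_exp]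
    have hcancel : κ * ((2 * B + 1) / κ) = 2 * B + 1 := by field_simp
    have hx' := abs_le.1 (hB x (by linarith))
    have hxK' := abs_le.1 (hB (x / K) hxK)
    rw [hlog, mul_sub, hcancel] at hxK'
    rw [sum_sdiff_eq_sub (membersBelow_mono (div_le_self hx₀.le hK.le))]
    linarith
  have hterm : ∀ p ∈ membersBelow P x \ membersBelow P (x / K), log p / p ≤ K * (log x / x) := by
    intro p hp
    obtain ⟨-, hpK, hpx⟩ := mem_membersBelow_sdiff.1 hp
    calc log p / p ≤ log x / (x / K) := by
          gcongr
          linarith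
      _ = K * (log x / x) := by field_simp
  have hcard := hmass.trans (sum_le_card_nsmul _ _ _ hterm)
  rw [nsmul_eq_mul, ← div_le_iff₀ (by positivity)] at hcard
  refine le_of_eq_of_le ?_ hcard
  field_simp

end ChebyshevLowerBound

section ElementarySymmetricSums

open Finset
open scoped Nat

variable {ι : Type*}

lemma sum_powersetCard_succ_sum_eq [DecidableEq ι] {M : Type*} [AddCommMonoid M]
    (s : Finset ι) (k : ℕ) (g : Finset ι → ι → M) :
    ∑ U ∈ powersetCard (k + 1) s, ∑ i ∈ U, g U i =
      ∑ T ∈ powersetCard k s, ∑ i ∈ s \ T, g (insert i T) i := by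
  rw [sum_sigma', sum_sigma']
  refine sum_bij' (fun x _ ↦ ⟨x.1.erase x.2, x.2⟩) (fun x _ ↦ ⟨insert x.2 x.1, x.2⟩)
    ?mapsTo ?invMapsTo ?leftInv ?rightInv ?value
  case mapsTo =>
    rintro ⟨U, i⟩ h
    simp only [mem_sigma, mem_powersetCard, mem_sdiff] at h ⊢
    refine ⟨⟨(erase_subset _ _).trans h.1.1, ?_⟩, h.1.1 h.2, notMem_erase i U⟩
    rw [card_erase_of_mem h.2, h.1.2, Nat.add_sub_cancel]
  case invMapsTo =>
    rintro ⟨T, i⟩ h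
    simp only [mem_sigma, mem_powersetCard, mem_sdiff] at h ⊢
    refine ⟨⟨insert_subset h.2.1 h.1.1, ?_⟩, mem_insert_self i T⟩
    rw [card_insert_of_notMem h.2.2, h.1.2]
  case rightInv =>
    rintro ⟨T, i⟩ h
    rw [erase_insert (mem_sdiff.1 (mem_sigma.1 h).2).2]
  all_goals
    rintro ⟨U, i⟩ h
    rw [insert_erase (mem_sigma.1 h).2]

lemma sum_powersetCard_succ_prod_mul_sum [DecidableEq ι] {R : Type*} [CommSemiring R]
    (w v : ι → R) (s : Finset ι) (k : ℕ) :
    ∑ U ∈ powersetCard (k + 1) s, (∏ i ∈ U, w i) * ∑ i ∈ U, v i =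
      ∑ T ∈ powersetCard k s, (∏ i ∈ T, w i) * ∑ i ∈ s \ T, w i * v i := by
  simp_rw [mul_sum]
  rw [sum_powersetCard_succ_sum_eq s k fun U i ↦ (∏ i ∈ U, w i) * v i]
  refine sum_congr rfl fun T _ ↦ sum_congr rfl fun i hi ↦ ?_
  rw [prod_insert (mem_sdiff.1 hi).2]
  ring

lemma succ_mul_sum_powersetCard_succ_prod [DecidableEq ι] {R : Type*} [CommSemiring R]
    (w : ι → R) (s : Finset ι) (k : ℕ) :
    (k + 1) * ∑ U ∈ powersetCard (k + 1) s, ∏ i ∈ U, w i =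
      ∑ T ∈ powersetCard k s, (∏ i ∈ T, w i) * ∑ i ∈ s \ T, w i := by
  have h := sum_powersetCard_succ_prod_mul_sum w (fun _ ↦ 1) s k
  simp only [mul_one] at h
  rw [← h, mul_sum]
  refine sum_congr rfl fun U hU ↦ ?_
  rw [sum_const, (mem_powersetCard.1 hU).2, nsmul_eq_mul, mul_one, Nat.cast_add_one, mul_comm]

variable {w v : ι → ℝ}

lemma sum_powersetCard_succ_prod_mul_sum_le (hw : ∀ i, 0 ≤ w i) (hv : ∀ i, 0 ≤ v i)
    (s : Finset ι) (k : ℕ) :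
    ∑ U ∈ powersetCard (k + 1) s, (∏ i ∈ U, w i) * ∑ i ∈ U, v i ≤
      (∑ T ∈ powersetCard k s, ∏ i ∈ T, w i) * ∑ i ∈ s, w i * v i := by
  classical
  rw [sum_powersetCard_succ_prod_mul_sum, sum_mul]
  refine sum_le_sum fun T _ ↦ mul_le_mul_of_nonneg_left ?_ (prod_nonneg fun i _ ↦ hw i)
  exact sum_le_sum_of_subset_of_nonneg sdiff_subset fun i _ _ ↦ mul_nonneg (hw i) (hv i)

lemma sum_powersetCard_prod_le (hw : ∀ i, 0 ≤ w i) (s : Finset ι) (k : ℕ) :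
    ∑ T ∈ powersetCard k s, ∏ i ∈ T, w i ≤ (∑ i ∈ s, w i) ^ k / k ! := by
  classical
  induction k with
  | zero => simp
  | succ k ih =>
    have hS : 0 ≤ ∑ i ∈ s, w i := sum_nonneg fun i _ ↦ hw i
    have hrec : (k + 1) * ∑ U ∈ powersetCard (k + 1) s, ∏ i ∈ U, w i ≤
        (∑ T ∈ powersetCard k s, ∏ i ∈ T, w i) * ∑ i ∈ s, w i := by
      have h := sum_powersetCard_succ_prod_mul_sum_le hw (fun _ ↦ zero_le_one) s k
      rw [sum_powersetCard_succ_prod_mul_sum] at h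
      simpa only [mul_one, ← succ_mul_sum_powersetCard_succ_prod] using h
    refine le_of_mul_le_mul_left (hrec.trans ?_) (by positivity : (0 : ℝ) < k + 1)
    calc _ ≤ (∑ i ∈ s, w i) ^ k / k ! * ∑ i ∈ s, w i := by gcongr
      _ = _ := by
        rw [Nat.factorial_succ]
        push_cast
        field_simp
        ring

lemma sum_powersetCard_prod_mul_sum_le (hw : ∀ i, 0 ≤ w i) (hv : ∀ i, 0 ≤ v i) (s : Finset ι)
    (hS : 0 < ∑ i ∈ s, w i) (k : ℕ) :
    ∑ T ∈ powersetCard k s, (∏ i ∈ T, w i) * ∑ i ∈ T, v i ≤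
      (∑ i ∈ s, w i) ^ k / k ! * (k * (∑ i ∈ s, w i * v i) / ∑ i ∈ s, w i) := by
  obtain _ | k := k
  · simp
  have hwv : 0 ≤ ∑ i ∈ s, w i * v i := sum_nonneg fun i _ ↦ mul_nonneg (hw i) (hv i)
  calc _ ≤ (∑ i ∈ s, w i) ^ k / k ! * ∑ i ∈ s, w i * v i :=
        (sum_powersetCard_succ_prod_mul_sum_le hw hv s k).trans
          (mul_le_mul_of_nonneg_right (sum_powersetCard_prod_le hw s k) hwv)
    _ = _ := by
        rw [Nat.factorial_succ]
        push_cast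
        field_simp
        ring

lemma le_sum_powersetCard_prod (hw : ∀ i, 0 ≤ w i) (s : Finset ι) (hS : 0 < ∑ i ∈ s, w i)
    (k : ℕ) :
    (∑ i ∈ s, w i) ^ k / k ! * (1 - k ^ 2 * (∑ i ∈ s, w i * w i) / (∑ i ∈ s, w i) ^ 2) ≤
      ∑ T ∈ powersetCard k s, ∏ i ∈ T, w i := by
  classical
  induction k with
  | zero => simp
  | succ k ih =>
    have hrec : (k + 1) * ∑ U ∈ powersetCard (k + 1) s, ∏ i ∈ U, w i =
        (∑ T ∈ powersetCard k s, ∏ i ∈ T, w i) * ∑ i ∈ s, w i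
          - ∑ T ∈ powersetCard k s, (∏ i ∈ T, w i) * ∑ i ∈ T, w i := by
      rw [succ_mul_sum_powersetCard_succ_prod, sum_mul, ← sum_sub_distrib]
      refine sum_congr rfl fun T hT ↦ ?_
      rw [← sum_sdiff (mem_powersetCard.1 hT).1]
      ring
    have hrepeat := sum_powersetCard_prod_mul_sum_le hw hw s hS k
    have hQ : 0 ≤ ∑ i ∈ s, w i * w i := sum_nonneg fun i _ ↦ mul_nonneg (hw i) (hw i)
    set S := ∑ i ∈ s, w i
    set Q := ∑ i ∈ s, w i * w i
    have hmain := mul_le_mul_of_nonneg_right ih hS.le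
    have hdrop : 0 ≤ S ^ k / k ! * ((k + 1) * Q / S) := by positivity
    have hsquare : (k + 1) * (S ^ (k + 1) / (k + 1)! *
        (1 - ((k + 1 : ℕ) : ℝ) ^ 2 * Q / S ^ 2)) =
        S ^ k / k ! * (1 - k ^ 2 * Q / S ^ 2) * S - S ^ k / k ! * (k * Q / S)
          - S ^ k / k ! * ((k + 1) * Q / S) := by
      rw [Nat.factorial_succ]
      push_cast
      field_simp
      ring
    refine le_of_mul_le_mul_left ?_ (by positivity : (0 : ℝ) < k + 1)
    rw [hrec, hsquare]
    linarith

lemma sum_filter_lt_prod_le (hw : ∀ i, 0 ≤ w i) (hv : ∀ i, 0 ≤ v i) (F : Finset (Finset ι))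
    {V : ℝ} (hV : 0 < V) :
    ∑ T ∈ F with V < ∑ i ∈ T, v i, ∏ i ∈ T, w i ≤
      (∑ T ∈ F, (∏ i ∈ T, w i) * ∑ i ∈ T, v i) / V := by
  have hprod (T : Finset ι) : 0 ≤ ∏ i ∈ T, w i := prod_nonneg fun i _ ↦ hw i
  rw [le_div_iff₀ hV, sum_mul]
  calc _ ≤ ∑ T ∈ F with V < ∑ i ∈ T, v i, (∏ i ∈ T, w i) * ∑ i ∈ T, v i :=
        sum_le_sum fun T hT ↦ mul_le_mul_of_nonneg_left (mem_filter.1 hT).2.le (hprod T)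
    _ ≤ _ := sum_le_sum_of_subset_of_nonneg (filter_subset _ _)
        fun T _ _ ↦ mul_nonneg (hprod T) (sum_nonneg fun i _ ↦ hv i)

lemma half_mul_le_sum_filter_prod (hw : ∀ i, 0 ≤ w i) (hv : ∀ i, 0 ≤ v i) {s : Finset ι}
    (hS : 0 < ∑ i ∈ s, w i) {A V : ℝ} (hV : 0 < V) {k : ℕ} (hk : k ≤ A * ∑ i ∈ s, w i)
    (hsq : A ^ 2 * ∑ i ∈ s, w i * w i ≤ 1 / 4) (hmean : A * ∑ i ∈ s, w i * v i ≤ V / 4) :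
    1 / 2 * ((∑ i ∈ s, w i) ^ k / k !) ≤
      ∑ T ∈ powersetCard k s with ∑ i ∈ T, v i ≤ V, ∏ i ∈ T, w i := by
  have htotal := le_sum_powersetCard_prod hw s hS k
  have hlarge := (sum_filter_lt_prod_le hw hv (powersetCard k s) hV).trans
    (div_le_div_of_nonneg_right (sum_powersetCard_prod_mul_sum_le hw hv s hS k) hV.le)
  have hsplit := sum_filter_add_sum_filter_not (powersetCard k s) (fun T ↦ ∑ i ∈ T, v i ≤ V)
    fun T ↦ ∏ i ∈ T, w i
  simp only [not_le] at hsplit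
  have hQ : 0 ≤ ∑ i ∈ s, w i * w i := sum_nonneg fun i _ ↦ mul_nonneg (hw i) (hw i)
  have hwv : 0 ≤ ∑ i ∈ s, w i * v i := sum_nonneg fun i _ ↦ mul_nonneg (hw i) (hv i)
  set S := ∑ i ∈ s, w i
  have hM : 0 ≤ S ^ k / k ! := by positivity
  have hrepeat : k ^ 2 * (∑ i ∈ s, w i * w i) / S ^ 2 ≤ 1 / 4 := by
    rw [div_le_iff₀ (by positivity)]
    calc _ ≤ (A * S) ^ 2 * ∑ i ∈ s, w i * w i := by gcongr
      _ = (A ^ 2 * ∑ i ∈ s, w i * w i) * S ^ 2 := by ring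
      _ ≤ 1 / 4 * S ^ 2 := by gcongr
  have htail : k * (∑ i ∈ s, w i * v i) / S / V ≤ 1 / 4 := by
    rw [div_div, div_le_iff₀ (by positivity)]
    calc _ ≤ (A * S) * ∑ i ∈ s, w i * v i := by gcongr
      _ = (A * ∑ i ∈ s, w i * v i) * S := by ring
      _ ≤ V / 4 * S := by gcongr
      _ = 1 / 4 * (S * V) := by ring
  rw [mul_div_assoc] at hlarge
  linarith [mul_le_mul_of_nonneg_left hrepeat hM, mul_le_mul_of_nonneg_left htail hM]

end ElementarySymmetricSums

/-- The squarefree integers below `N` with exactly `r` prime factors, all of them in `P`; for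
`P = pellPrimes` this is `PellDr r N`. -/
def squarefreeProducts (P : Set ℕ) (r : ℕ) (N : ℝ) : Set ℕ :=
  {d | Squarefree d ∧ (∀ p : ℕ, p.Prime → p ∣ d → p ∈ P) ∧ (d : ℝ) < N ∧ d.primeFactors.card = r}

/-- The `r`-element subsets of `P` with product below `N`: when `P` consists of primes, these are
the sets of prime factors of the elements of `squarefreeProducts P r N`. -/
noncomputable def factorSets (P : Set ℕ) (r : ℕ) (N : ℝ) : Finset (Finset ℕ) :=
  {U ∈ Finset.powersetCard r (membersBelow P N) | ∏ p ∈ U, (p : ℝ) < N}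

section FactorSets

open Finset Real

variable {P : Set ℕ} {r : ℕ} {N : ℝ}

lemma squarefree_prod_of_prime {U : Finset ℕ} (hU : ∀ p ∈ U, p.Prime) : Squarefree (∏ p ∈ U, p) :=
  squarefree_prod_of_pairwise_isCoprime
    (fun _ hp _ hq hpq ↦
      Nat.coprime_iff_isRelPrime.1 ((Nat.coprime_primes (hU _ hp) (hU _ hq)).2 hpq))
    fun p hp ↦ (hU p hp).prime.squarefree

lemma one_le_prod_of_prime {U : Finset ℕ} (hU : ∀ p ∈ U, p.Prime) : 1 ≤ ∏ p ∈ U, (p : ℝ) :=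
  one_le_prod fun p hp ↦ mod_cast (hU p hp).one_le

lemma mem_factorSets (hP : ∀ p ∈ P, p.Prime) {U : Finset ℕ} :
    U ∈ factorSets P r N ↔ ↑U ⊆ P ∧ #U = r ∧ ∏ p ∈ U, (p : ℝ) < N := by
  simp only [factorSets, mem_filter, mem_powersetCard]
  refine ⟨fun ⟨⟨hU, hr⟩, hN⟩ ↦ ⟨fun p hp ↦ (mem_membersBelow.1 (hU hp)).2, hr, hN⟩,
    fun ⟨hU, hr, hN⟩ ↦ ⟨⟨fun p hp ↦ mem_membersBelow.2 ⟨?_, hU hp⟩, hr⟩, hN⟩⟩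
  have hdvd : p ∣ ∏ p ∈ U, p := dvd_prod_of_mem _ hp
  have hpos : 0 < ∏ p ∈ U, p := prod_pos fun q hq ↦ (hP q (hU hq)).pos
  calc (p : ℝ) ≤ (∏ p ∈ U, p : ℕ) := mod_cast Nat.le_of_dvd hpos hdvd
    _ < N := by rwa [Nat.cast_prod]

lemma prime_of_mem_factorSets (hP : ∀ p ∈ P, p.Prime) {U : Finset ℕ}
    (hU : U ∈ factorSets P r N) {p : ℕ} (hp : p ∈ U) : p.Prime :=
  hP p (((mem_factorSets hP).1 hU).1 hp)

lemma squarefreeProducts_eq_image (hP : ∀ p ∈ P, p.Prime) :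
    squarefreeProducts P r N = (fun U : Finset ℕ ↦ ∏ p ∈ U, p) '' factorSets P r N := by
  ext d
  simp only [squarefreeProducts, Set.mem_ofPred_eq, Set.mem_image, SetLike.mem_coe]
  constructor
  · rintro ⟨hd, hdP, hdN, hdr⟩
    refine ⟨d.primeFactors, (mem_factorSets hP).2 ⟨fun p hp ↦ ?_, hdr, ?_⟩,
      Nat.prod_primeFactors_of_squarefree hd⟩
    · exact hdP p (Nat.prime_of_mem_primeFactors hp) (Nat.dvd_of_mem_primeFactors hp)
    · rwa [← Nat.cast_prod, Nat.prod_primeFactors_of_squarefree hd]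
  · rintro ⟨U, hU, rfl⟩
    have hprime (p : ℕ) (hp : p ∈ U) : p.Prime := prime_of_mem_factorSets hP hU hp
    obtain ⟨hUP, hr, hN⟩ := (mem_factorSets hP).1 hU
    refine ⟨squarefree_prod_of_prime hprime, fun p hp hdvd ↦ hUP ?_,
      (Nat.cast_prod _ _).trans_lt hN, ?_⟩
    · rw [← Nat.primeFactors_prod hprime]
      exact hp.mem_primeFactors hdvd (squarefree_prod_of_prime hprime).ne_zero
    · rw [Nat.primeFactors_prod hprime, hr]

lemma ncard_squarefreeProducts (hP : ∀ p ∈ P, p.Prime) :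
    (squarefreeProducts P r N).ncard = #(factorSets P r N) := by
  rw [squarefreeProducts_eq_image hP, Set.InjOn.ncard_image, Set.ncard_coe_finset]
  intro U hU V hV hUV
  rw [← Nat.primeFactors_prod fun p ↦ prime_of_mem_factorSets hP hU,
    ← Nat.primeFactors_prod fun p ↦ prime_of_mem_factorSets hP hV]
  exact congrArg Nat.primeFactors hUV

end FactorSets

section UpperBound

open Filter Finset Real
open scoped Nat

variable {P : Set ℕ} {κ : ℝ}

lemma card_filter_prod_lt_le {s : Finset ℕ} (hs : ∀ p ∈ s, 0 < p) (r : ℕ) {y : ℝ} (hy : 0 ≤ y) :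
    #{U ∈ powersetCard r s | ∏ p ∈ U, ((p : ℕ) : ℝ) < y} ≤
      y * ((∑ p ∈ s, (p : ℝ)⁻¹) ^ r / r !) := by
  have hterm : ∀ U ∈ {U ∈ powersetCard r s | ∏ p ∈ U, ((p : ℕ) : ℝ) < y},
      1 ≤ y * ∏ p ∈ U, (p : ℝ)⁻¹ := by
    intro U hU
    simp only [mem_filter, mem_powersetCard] at hU
    have hpos : 0 < ∏ p ∈ U, (p : ℝ) := prod_pos fun p hp ↦ Nat.cast_pos.2 (hs p (hU.1.1 hp))
    rw [prod_inv_distrib, ← div_eq_mul_inv, one_le_div hpos]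
    exact hU.2.le
  calc (#{U ∈ powersetCard r s | ∏ p ∈ U, ((p : ℕ) : ℝ) < y} : ℝ)
      ≤ ∑ U ∈ powersetCard r s with ∏ p ∈ U, ((p : ℕ) : ℝ) < y, y * ∏ p ∈ U, (p : ℝ)⁻¹ := by
        simpa using card_nsmul_le_sum _ _ (1 : ℝ) hterm
    _ ≤ ∑ U ∈ powersetCard r s, y * ∏ p ∈ U, (p : ℝ)⁻¹ :=
        sum_le_sum_of_subset_of_nonneg (filter_subset _ _) fun U _ _ ↦ by positivity
    _ ≤ y * ((∑ p ∈ s, (p : ℝ)⁻¹) ^ r / r !) := by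
        rw [← mul_sum]
        gcongr
        exact sum_powersetCard_prod_le (fun p ↦ by positivity) s r

lemma sum_log_primes_mul_prod_lt_le {s T : Finset ℕ} (hs : ∀ p ∈ s, p.Prime) (hT : T ⊆ s) {N : ℝ}
    (hN : 0 ≤ N) :
    ∑ p ∈ s \ T, (if ∏ q ∈ insert p T, (q : ℝ) < N then log p else 0) ≤
      log 4 * N * ∏ p ∈ T, (p : ℝ)⁻¹ := by
  have hpos : 0 < ∏ p ∈ T, (p : ℝ) := prod_pos fun p hp ↦ Nat.cast_pos.2 (hs p (hT hp)).pos
  have htheta := Chebyshev.theta_le_log4_mul_x (div_nonneg hN hpos.le)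
  rw [prod_inv_distrib, mul_assoc, ← div_eq_mul_inv]
  refine le_trans ?_ htheta
  rw [Chebyshev.theta, ← sum_filter]
  refine sum_le_sum_of_subset_of_nonneg (fun p hp ↦ ?_) fun p _ _ ↦ log_natCast_nonneg p
  simp only [mem_filter, Finset.mem_sdiff] at hp
  obtain ⟨⟨hps, hpT⟩, hlt⟩ := hp
  rw [prod_insert hpT] at hlt
  have hprime := hs p hps
  exact mem_filter.2 ⟨mem_Ioc.2 ⟨hprime.pos, Nat.le_floor ((le_div_iff₀ hpos).2 hlt.le)⟩, hprime⟩

lemma sum_log_prod_factorSets_le (hP : ∀ p ∈ P, p.Prime) {N : ℝ} (hN : 0 ≤ N) (k : ℕ) :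
    ∑ U ∈ factorSets P (k + 1) N, log (∏ p ∈ U, (p : ℝ)) ≤
      log 4 * N * ((∑ p ∈ membersBelow P N, (p : ℝ)⁻¹) ^ k / k !) := by
  have hprime : ∀ p ∈ membersBelow P N, p.Prime := fun p hp ↦ hP p (mem_membersBelow.1 hp).2
  calc ∑ U ∈ factorSets P (k + 1) N, log (∏ p ∈ U, (p : ℝ))
      = ∑ U ∈ powersetCard (k + 1) (membersBelow P N), ∑ p ∈ U,
          (if ∏ q ∈ U, (q : ℝ) < N then log p else 0) := by
        rw [factorSets, sum_filter]
        refine sum_congr rfl fun U hU ↦ ?_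
        split_ifs with hlt
        · refine log_prod fun p hp ↦ ?_
          exact Nat.cast_ne_zero.2 (hprime p ((mem_powersetCard.1 hU).1 hp)).ne_zero
        · rw [sum_const_zero]
    _ = ∑ T ∈ powersetCard k (membersBelow P N), ∑ p ∈ membersBelow P N \ T,
          (if ∏ q ∈ insert p T, (q : ℝ) < N then log p else 0) :=
        sum_powersetCard_succ_sum_eq _ k fun U p ↦ if ∏ q ∈ U, ((q : ℕ) : ℝ) < N then log p else 0
    _ ≤ ∑ T ∈ powersetCard k (membersBelow P N), log 4 * N * ∏ p ∈ T, (p : ℝ)⁻¹ :=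
        sum_le_sum fun T hT ↦
          sum_log_primes_mul_prod_lt_le hprime (mem_powersetCard.1 hT).1 hN
    _ ≤ log 4 * N * ((∑ p ∈ membersBelow P N, (p : ℝ)⁻¹) ^ k / k !) := by
        rw [← mul_sum]
        have : 0 ≤ log 4 := log_nonneg (by norm_num)
        gcongr
        exact sum_powersetCard_prod_le (fun p ↦ by positivity) _ k

-- Products below `√N` are few by Rankin's trick; each of the others has logarithm at least
-- `log N / 2`, so the sum of the logarithms bounds their number.
lemma card_factorSets_succ_le (hP : ∀ p ∈ P, p.Prime) {N : ℝ} (hN : 1 < N) (k : ℕ) :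
    (#(factorSets P (k + 1) N) : ℝ) ≤
      (2 * log 4 * (N / log N) + √N * ∑ p ∈ membersBelow P N, (p : ℝ)⁻¹) *
        ((∑ p ∈ membersBelow P N, (p : ℝ)⁻¹) ^ k / k !) := by
  have hsmall : (#{U ∈ factorSets P (k + 1) N | ∏ p ∈ U, ((p : ℕ) : ℝ) < √N} : ℝ) ≤
      √N * ((∑ p ∈ membersBelow P N, (p : ℝ)⁻¹) ^ (k + 1) / (k + 1)!) := by
    refine le_trans (Nat.cast_le.2 (card_le_card (filter_subset_filter _ (filter_subset _ _))))
      (card_filter_prod_lt_le (fun p hp ↦ ?_) (k + 1) (sqrt_nonneg N))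
    exact (hP p (mem_membersBelow.1 hp).2).pos
  have hlarge : #{U ∈ factorSets P (k + 1) N | ¬∏ p ∈ U, ((p : ℕ) : ℝ) < √N} * (log N / 2) ≤
      log 4 * N * ((∑ p ∈ membersBelow P N, (p : ℝ)⁻¹) ^ k / k !) := by
    rw [← nsmul_eq_mul]
    refine (card_nsmul_le_sum _ (fun U ↦ log (∏ p ∈ U, ((p : ℕ) : ℝ))) _ fun U hU ↦ ?_).trans
      ((sum_le_sum_of_subset_of_nonneg (filter_subset _ _) fun U hU _ ↦ ?_).trans
        (sum_log_prod_factorSets_le hP (zero_le_one.trans hN.le) k))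
    · rw [← log_sqrt (by linarith)]
      exact log_le_log (by positivity) (not_lt.1 (mem_filter.1 hU).2)
    · exact log_nonneg (one_le_prod_of_prime fun p ↦ prime_of_mem_factorSets hP hU)
  have hS : 0 ≤ ∑ p ∈ membersBelow P N, (p : ℝ)⁻¹ := sum_nonneg fun p _ ↦ by positivity
  rw [← card_filter_add_card_filter_not fun U ↦ ∏ p ∈ U, ((p : ℕ) : ℝ) < √N, Nat.cast_add, add_mul,
    add_comm]
  set S := ∑ p ∈ membersBelow P N, (p : ℝ)⁻¹
  have hlog := log_pos hN
  refine add_le_add ?_ ?_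
  · rw [← le_div_iff₀ (by positivity)] at hlarge
    refine hlarge.trans_eq ?_
    field_simp
  · refine hsmall.trans ?_
    rw [mul_assoc, pow_succ', mul_div_assoc]
    gcongr
    exact k.le_succ

lemma pow_le_pow_mul_exp {a b D M : ℝ} (ha : 0 < a) (hb : 0 ≤ b) (hD : 0 ≤ D) (hbD : b ≤ a + D)
    {k : ℕ} (hk : k ≤ M * a) : b ^ k ≤ a ^ k * exp (M * D) := by
  have hbase : b ≤ a * exp (D / a) := by
    calc b ≤ a * (D / a + 1) := hbD.trans_eq (by field_simp; ring)
      _ ≤ a * exp (D / a) := by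
          gcongr
          exact add_one_le_exp _
  calc b ^ k ≤ (a * exp (D / a)) ^ k := by gcongr
    _ = a ^ k * exp (k * (D / a)) := by rw [exp_nat_mul, mul_pow]
    _ ≤ a ^ k * exp (M * a * (D / a)) := by gcongr
    _ = a ^ k * exp (M * D) := by field_simp

lemma HasMertensDensity.eventually_sqrt_mul_sum_inv_le (h : HasMertensDensity P κ) :
    ∀ᶠ N : ℝ in atTop, √N * ∑ p ∈ membersBelow P N, (p : ℝ)⁻¹ ≤ N / log N := by
  obtain ⟨D, hD⟩ := h.exists_abs_sum_inv_sub_le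
  have hlog_sq := (isLittleO_log_rpow_rpow_atTop (s := 1 / 2) 2 (by norm_num)).def
    (show 0 < (|κ| + 1)⁻¹ by positivity)
  filter_upwards [hlog_sq, tendsto_log_atTop.eventually_ge_atTop (max D 1),
    eventually_ge_atTop 2] with N hsq hlog hN
  obtain ⟨hlogD, hlog₁⟩ := max_le_iff.1 hlog
  rw [norm_of_nonneg (by positivity), norm_of_nonneg (by positivity), ← sqrt_eq_rpow,
    rpow_two, inv_mul_eq_div, le_div_iff₀ (by positivity)] at hsq
  have hloglog : log (log N) ≤ log N := log_le_self (by linarith)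
  have hS : ∑ p ∈ membersBelow P N, (p : ℝ)⁻¹ ≤ (|κ| + 1) * log N := by
    have hκ : κ * log (log N) ≤ |κ| * log N :=
      mul_le_mul (le_abs_self κ) hloglog (log_nonneg hlog₁) (abs_nonneg κ)
    linarith [(abs_le.1 (hD N hN)).2]
  rw [le_div_iff₀ (by linarith)]
  calc √N * (∑ p ∈ membersBelow P N, (p : ℝ)⁻¹) * log N
      ≤ √N * ((|κ| + 1) * log N) * log N := by gcongr
    _ = √N * (log N ^ 2 * (|κ| + 1)) := by ring
    _ ≤ √N * √N := by gcongr
    _ = N := mul_self_sqrt (by linarith)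

lemma eventually_le_log_log (D : ℝ) : ∀ᶠ N : ℝ in atTop, D ≤ log (log N) :=
  (tendsto_log_atTop.comp tendsto_log_atTop).eventually_ge_atTop D

theorem HasMertensDensity.exists_card_factorSets_le (h : HasMertensDensity P κ) (hκ : 0 < κ)
    (A : ℝ) : ∃ C : ℝ, 0 < C ∧ ∀ᶠ N : ℝ in atTop, ∀ k : ℕ, k ≤ A * log (log N) →
      #(factorSets P (k + 1) N) ≤ C * (N / log N) * (κ * log (log N)) ^ k / k ! := by
  obtain ⟨D, hD⟩ := h.exists_abs_sum_inv_sub_le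
  have hD₀ : 0 ≤ D := (abs_nonneg _).trans (hD 2 le_rfl)
  refine ⟨(2 * log 4 + 1) * exp (A / κ * D), by positivity, ?_⟩
  filter_upwards [h.eventually_sqrt_mul_sum_inv_le, eventually_le_log_log 1,
    eventually_ge_atTop 2] with N hsqrt hloglog hN k hk
  have hlog : 0 < log N := log_pos (by linarith)
  have hcard := card_factorSets_succ_le h.prime_of_mem (by linarith : 1 < N) k
  have hSnonneg : 0 ≤ ∑ p ∈ membersBelow P N, (p : ℝ)⁻¹ := sum_nonneg fun p _ ↦ by positivity
  have hS := (abs_le.1 (hD N hN)).2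
  set S := ∑ p ∈ membersBelow P N, (p : ℝ)⁻¹
  have hpow : S ^ k ≤ (κ * log (log N)) ^ k * exp (A / κ * D) :=
    pow_le_pow_mul_exp (by positivity) hSnonneg hD₀ (sub_le_iff_le_add'.1 hS)
      (hk.trans_eq (by field_simp))
  calc (#(factorSets P (k + 1) N) : ℝ)
      ≤ (2 * log 4 * (N / log N) + N / log N) *
          ((κ * log (log N)) ^ k * exp (A / κ * D) / k !) := hcard.trans (by gcongr)
    _ = (2 * log 4 + 1) * exp (A / κ * D) * (N / log N) * (κ * log (log N)) ^ k / k ! := by ring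

end UpperBound

section LowerBound

open Filter Finset Real
open scoped Nat

variable {P : Set ℕ} {κ : ℝ}

lemma sum_card_le_card_of_insert_mem {ι : Type*} [DecidableEq ι] {E F : Finset (Finset ι)}
    {Q : Finset ι → Finset ι} (hE : ∀ T ∈ F, ∀ i ∈ Q T, insert i T ∈ E)
    (hQ : ∀ T ∈ F, ∀ T' ∈ F, Disjoint (Q T) T') : ∑ T ∈ F, #(Q T) ≤ #E := by
  rw [← card_sigma]
  refine card_le_card_of_injOn (fun x ↦ insert x.2 x.1) ?_ ?_
  · rintro ⟨T, i⟩ hx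
    obtain ⟨hT, hi⟩ := Finset.mem_sigma.1 hx
    exact hE T hT i hi
  · rintro ⟨T, i⟩ hx ⟨T', i'⟩ hx' heq
    obtain ⟨hT, hi⟩ := Finset.mem_sigma.1 hx
    obtain ⟨hT', hi'⟩ := Finset.mem_sigma.1 hx'
    change insert i T = insert i' T' at heq
    have hiT' : i ∉ T' := disjoint_left.1 (hQ T hT T' hT') hi
    obtain rfl : i = i' := (mem_insert.1 (heq ▸ mem_insert_self i T)).resolve_right hiT'
    obtain rfl : T = T' := by
      rw [← erase_insert (disjoint_left.1 (hQ T hT T hT) hi), heq, erase_insert hiT']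
    rfl

lemma insert_mem_factorSets (hP : ∀ p ∈ P, p.Prime) {T : Finset ℕ} (hT : ↑T ⊆ P) {p : ℕ}
    (hp : p ∈ P) (hpT : p ∉ T) {N : ℝ} (hlt : p < N / ∏ q ∈ T, (q : ℝ)) :
    insert p T ∈ factorSets P (#T + 1) N := by
  have hone := one_le_prod_of_prime fun q hq ↦ hP q (hT hq)
  refine (mem_factorSets hP).2 ⟨?_, card_insert_of_notMem hpT, ?_⟩
  · rw [coe_insert, Set.insert_subset_iff]
    exact ⟨hp, hT⟩
  · rwa [prod_insert hpT, ← lt_div_iff₀ (by linarith)]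

lemma prod_le_of_sum_log_le {T : Finset ℕ} (hT : ∀ p ∈ T, p.Prime) {z : ℝ} (hz : 0 < z)
    (hTz : ∑ p ∈ T, log p ≤ log z) : ∏ p ∈ T, (p : ℝ) ≤ z := by
  rwa [← log_prod fun p hp ↦ Nat.cast_ne_zero.2 (hT p hp).ne_zero,
    log_le_log_iff (by linarith [one_le_prod_of_prime hT]) hz] at hTz

lemma mul_div_log_div_le {c N y : ℝ} (hc : 0 ≤ c) (hy : 1 ≤ y) (hyN : y < N) :
    c * (N / log N) * y⁻¹ ≤ c * (N / y / log (N / y)) := by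
  have hN : 0 < N := by linarith
  have hlog : 0 < log (N / y) := log_pos ((one_lt_div (by linarith)).2 hyN)
  calc c * (N / log N) * y⁻¹ = c * (N / y / log N) := by field_simp
    _ ≤ c * (N / y / log (N / y)) := by
        gcongr
        exact div_le_self hN.le hy

lemma mul_le_div_of_mul_sq_le {K N y z : ℝ} (hK : 0 ≤ K) (hy : 0 < y) (hyz : y ≤ z)
    (hN : K * z ^ 2 ≤ N) : K * z ≤ N / y := by
  have hz : 0 ≤ z := hy.le.trans hyz
  rw [le_div_iff₀ hy]
  calc K * z * y ≤ K * z * z := by gcongr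
    _ = K * z ^ 2 := by ring
    _ ≤ N := hN

-- The sets counted are `insert p T` with `∏ T ≤ z` and `p` among the last primes below `N / ∏ T`;
-- those satisfy `z ≤ p`, so `p` is recovered as the only element of `insert p T` outside `s`.
lemma mul_sum_prod_inv_le_card_factorSets (hP : ∀ p ∈ P, p.Prime) {K c x₀ : ℝ} (hK : 1 < K)
    (hc : 0 ≤ c) (hx₀ : 1 < x₀)
    (hcount : ∀ x, x₀ ≤ x → c * (x / log x) ≤ #(membersBelow P x \ membersBelow P (x / K)))
    {N z : ℝ} (hz : x₀ ≤ z) (hN : K * z ^ 2 ≤ N) {s : Finset ℕ} (hs : s ⊆ membersBelow P z)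
    (k : ℕ) :
    c * (N / log N) * ∑ T ∈ powersetCard k s with ∑ p ∈ T, log (p : ℕ) ≤ log z,
      ∏ p ∈ T, (p : ℝ)⁻¹ ≤ #(factorSets P (k + 1) N) := by
  set F := {T ∈ powersetCard k s | ∑ p ∈ T, log (p : ℕ) ≤ log z}
  let Q (T : Finset ℕ) : Finset ℕ :=
    membersBelow P (N / ∏ p ∈ T, (p : ℝ)) \ membersBelow P (N / (∏ p ∈ T, (p : ℝ)) / K)
  have hF {T : Finset ℕ} (hT : T ∈ F) :
      T ⊆ s ∧ #T = k ∧ 1 ≤ ∏ p ∈ T, (p : ℝ) ∧ K * z ≤ N / ∏ p ∈ T, (p : ℝ) := by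
    obtain ⟨hTk, hTz⟩ := mem_filter.1 hT
    obtain ⟨hTs, hcard⟩ := mem_powersetCard.1 hTk
    have hprime (p : ℕ) (hp : p ∈ T) : p.Prime := hP p (mem_membersBelow.1 (hs (hTs hp))).2
    have hone := one_le_prod_of_prime hprime
    have hle := prod_le_of_sum_log_le hprime (by linarith) hTz
    exact ⟨hTs, hcard, hone, mul_le_div_of_mul_sq_le (by linarith) (by linarith) hle hN⟩
  have hdisj : ∀ T ∈ F, ∀ T' ∈ F, Disjoint (Q T) T' := by
    refine fun T hT T' hT' ↦ disjoint_left.2 fun p hp hpT' ↦ ?_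
    have hzp : z ≤ N / (∏ p ∈ T, (p : ℝ)) / K := by
      rw [le_div_iff₀ (by linarith), mul_comm]
      exact (hF hT).2.2.2
    exact (mem_membersBelow.1 (hs ((hF hT').1 hpT'))).1.not_ge
      (hzp.trans (mem_membersBelow_sdiff.1 hp).2.1)
  have hmem : ∀ T ∈ F, ∀ p ∈ Q T, insert p T ∈ factorSets P (k + 1) N := fun T hT p hp ↦ by
    obtain ⟨hTs, rfl, -⟩ := hF hT
    obtain ⟨hpP, -, hlt⟩ := mem_membersBelow_sdiff.1 hp
    exact insert_mem_factorSets hP (fun q hq ↦ (mem_membersBelow.1 (hs (hTs hq))).2) hpP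
      (disjoint_left.1 (hdisj T hT T hT) hp) hlt
  refine le_trans ?_ (Nat.cast_le.2 (sum_card_le_card_of_insert_mem hmem hdisj))
  rw [mul_sum, Nat.cast_sum]
  refine sum_le_sum fun T hT ↦ ?_
  obtain ⟨-, -, hone, hge⟩ := hF hT
  have hx : x₀ ≤ N / ∏ p ∈ T, (p : ℝ) := by nlinarith
  rw [prod_inv_distrib]
  exact (mul_div_log_div_le hc hone ((one_lt_div (by linarith)).1 (by linarith))).trans
    (hcount _ hx)

lemma exp_neg_mul_pow_le_pow {a b D M : ℝ} (ha : 0 < a) (hD : 0 ≤ D) (hDa : D ≤ a / 2)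
    (hb : a - D ≤ b) {k : ℕ} (hk : k ≤ M * a) : exp (-(2 * M * D)) * a ^ k ≤ b ^ k := by
  have hx : D / a ≤ 1 / 2 := (div_le_iff₀ ha).2 (by linarith)
  have hx₀ : 0 ≤ D / a := by positivity
  have hbase : exp (-(2 * (D / a))) * a ≤ b := by
    calc exp (-(2 * (D / a))) * a ≤ (1 - D / a) * a := by
          gcongr
          rw [exp_neg, inv_le_iff_one_le_mul₀ (exp_pos _)]
          nlinarith [add_one_le_exp (2 * (D / a))]
      _ = a - D := by field_simp
      _ ≤ b := hb
  calc exp (-(2 * M * D)) * a ^ k ≤ exp (k * -(2 * (D / a))) * a ^ k := by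
        gcongr
        calc -(2 * M * D) = M * a * -(2 * (D / a)) := by field_simp
          _ ≤ k * -(2 * (D / a)) := mul_le_mul_of_nonpos_right hk (by linarith)
    _ = (exp (-(2 * (D / a))) * a) ^ k := by rw [exp_nat_mul, mul_pow]
    _ ≤ b ^ k := by gcongr

lemma sum_inv_mul_inv_le {s : Finset ℕ} {y : ℝ} (hy : 0 < y) (hs : ∀ p ∈ s, y ≤ (p : ℝ)) :
    ∑ p ∈ s, (p : ℝ)⁻¹ * (p : ℝ)⁻¹ ≤ 2 / y := by
  obtain ⟨m, hm⟩ : ∃ m, ⌈y⌉₊ = m + 1 := Nat.exists_eq_add_one.2 (Nat.ceil_pos.2 hy)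
  calc ∑ p ∈ s, (p : ℝ)⁻¹ * (p : ℝ)⁻¹ = ∑ p ∈ s, ((p : ℝ) ^ 2)⁻¹ := by
        simp only [← mul_inv, sq]
    _ ≤ ∑ i ∈ Ioo m (s.sup id + 1), ((i : ℝ) ^ 2)⁻¹ := by
        refine sum_le_sum_of_subset_of_nonneg (fun p hp ↦ mem_Ioo.2 ⟨?_, ?_⟩)
          fun _ _ _ ↦ by positivity
        · rw [← Nat.add_one_le_iff, ← hm]
          exact Nat.ceil_le.2 (hs p hp)
        · exact Nat.lt_succ_of_le (le_sup (f := id) hp)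
    _ ≤ 2 / (m + 1) := sum_Ioo_inv_sq_le m _
    _ ≤ 2 / y := by
        gcongr
        exact (Nat.le_ceil y).trans_eq (by rw [hm, Nat.cast_add_one])

lemma HasMertensDensity.exists_le_sum_inv_sdiff (h : HasMertensDensity P κ) {δ : ℝ} (hδ : 0 < δ)
    (y : ℝ) : ∃ D : ℝ, 0 ≤ D ∧ ∀ᶠ N : ℝ in atTop, κ * log (log N) - D ≤
      ∑ p ∈ membersBelow P (N ^ δ) \ membersBelow P y, (p : ℝ)⁻¹ := by
  obtain ⟨D, hD⟩ := h.exists_abs_sum_inv_sub_le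
  have hD₀ : 0 ≤ D := (abs_nonneg _).trans (hD 2 le_rfl)
  refine ⟨D + |κ * log δ| + ∑ p ∈ membersBelow P y, (p : ℝ)⁻¹, by positivity, ?_⟩
  filter_upwards [(tendsto_rpow_atTop hδ).eventually_ge_atTop (max 2 y), eventually_gt_atTop 1]
    with N hNδ hN
  have hlog : log (log (N ^ δ)) = log δ + log (log N) := by
    rw [log_rpow (by linarith), log_mul hδ.ne' (log_pos hN).ne']
  have hsum := (abs_le.1 (hD (N ^ δ) ((le_max_left _ _).trans hNδ))).1
  rw [sum_sdiff_eq_sub (membersBelow_mono ((le_max_right _ _).trans hNδ))]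
  rw [hlog, mul_add] at hsum
  linarith [neg_abs_le (κ * log δ)]

-- Discarding the primes below `2 / η` makes `∑ p⁻²` small, and stopping at a small power of `N`
-- makes `∑ log p / p` small, at the cost of only a bounded part of `∑ p⁻¹`.
lemma HasMertensDensity.exists_sifted_subset (h : HasMertensDensity P κ) (hκ : 0 < κ) {η : ℝ}
    (hη : 0 < η) : ∃ D : ℝ, 0 ≤ D ∧ ∀ᶠ N : ℝ in atTop,
      ∃ s ⊆ membersBelow P (N ^ (1 / 4 : ℝ)), κ * log (log N) - D ≤ ∑ p ∈ s, (p : ℝ)⁻¹ ∧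
        ∑ p ∈ s, (p : ℝ)⁻¹ * (p : ℝ)⁻¹ ≤ η ∧ ∑ p ∈ s, (p : ℝ)⁻¹ * log p ≤ η * log N := by
  obtain ⟨B, hB⟩ := h.exists_bound
  set δ := min (η / (2 * κ)) (1 / 4)
  have hδ : 0 < δ := lt_min (by positivity) (by norm_num)
  have hκδ : κ * δ ≤ η / 2 := by
    calc κ * δ ≤ κ * (η / (2 * κ)) := by
          gcongr
          exact min_le_left _ _
      _ = η / 2 := by field_simp
  obtain ⟨D, hD₀, hD⟩ := h.exists_le_sum_inv_sdiff hδ (2 / η)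
  refine ⟨D, hD₀, ?_⟩
  filter_upwards [hD, tendsto_log_atTop.eventually_ge_atTop (B * (2 / η)), eventually_gt_atTop 1]
    with N hsum hlogN hN
  refine ⟨_, sdiff_subset.trans (membersBelow_mono ?_), hsum, ?_, ?_⟩
  · exact rpow_le_rpow_of_exponent_le hN.le (min_le_right _ _)
  · refine (sum_inv_mul_inv_le (by positivity) fun p hp ↦ ?_).trans_eq
      (div_div_cancel₀ two_ne_zero)
    exact (mem_membersBelow_sdiff.1 hp).2.1
  · have hlog : log (N ^ δ) = δ * log N := log_rpow (by linarith) δ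
    have hmertens := (abs_le.1 (hB (N ^ δ) (one_lt_rpow hN hδ))).2
    rw [hlog, ← mul_assoc] at hmertens
    rw [← mul_div_assoc, div_le_iff₀ hη] at hlogN
    calc _ ≤ ∑ p ∈ membersBelow P (N ^ δ), (p : ℝ)⁻¹ * log p :=
          sum_le_sum_of_subset_of_nonneg sdiff_subset fun p _ _ ↦ by positivity
      _ = ∑ p ∈ membersBelow P (N ^ δ), log p / p :=
          sum_congr rfl fun p _ ↦ inv_mul_eq_div _ _
      _ ≤ κ * δ * log N + B := by linarith
      _ ≤ η / 2 * log N + η / 2 * log N := by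
          gcongr
          · exact (log_pos hN).le
          · linarith
      _ = η * log N := by ring

lemma HasMertensDensity.exists_le_sum_prod_inv (h : HasMertensDensity P κ) (hκ : 0 < κ) {A : ℝ}
    (hA : 0 < A) : ∃ C : ℝ, 0 < C ∧ ∀ᶠ N : ℝ in atTop, ∀ k : ℕ, k ≤ A * log (log N) →
      ∃ s ⊆ membersBelow P (N ^ (1 / 4 : ℝ)), C * ((κ * log (log N)) ^ k / k !) ≤
        ∑ T ∈ powersetCard k s with ∑ p ∈ T, log (p : ℕ) ≤ log (N ^ (1 / 4 : ℝ)),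
          ∏ p ∈ T, (p : ℝ)⁻¹ := by
  set M := A / κ with hM
  have hM₀ : 0 < M := by positivity
  obtain ⟨D, hD₀, hsifted⟩ := h.exists_sifted_subset hκ
    (lt_min (by positivity) (by positivity) : 0 < min (1 / (4 * (2 * M) ^ 2)) (1 / (16 * (2 * M))))
  refine ⟨1 / 2 * exp (-(2 * M * D)), by positivity, ?_⟩
  filter_upwards [hsifted, eventually_le_log_log (max 1 (2 * D / κ)), eventually_gt_atTop 1]
    with N hs hloglog hN k hk
  obtain ⟨s, hsub, hsum, hsq, hmean⟩ := hs
  obtain ⟨hone, hD⟩ := max_le_iff.1 hloglog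
  have hlog := log_pos hN
  have ha : 0 < κ * log (log N) := by positivity
  rw [div_le_iff₀' hκ] at hD
  have hlogz : log (N ^ (1 / 4 : ℝ)) = 1 / 4 * log N := log_rpow (by linarith) _
  have hkM : k ≤ M * (κ * log (log N)) := hk.trans_eq (by rw [hM]; field_simp)
  have hkS : k ≤ 2 * M * ∑ p ∈ s, (p : ℝ)⁻¹ := by
    calc (k : ℝ) ≤ 2 * M * (κ * log (log N) / 2) := hkM.trans_eq (by ring)
      _ ≤ 2 * M * ∑ p ∈ s, (p : ℝ)⁻¹ := by
          gcongr
          linarith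
  have hhalf := half_mul_le_sum_filter_prod (w := fun p : ℕ ↦ (p : ℝ)⁻¹) (v := fun p : ℕ ↦ log p)
    (fun p ↦ by positivity) log_natCast_nonneg (s := s) (by linarith)
    (V := log (N ^ (1 / 4 : ℝ))) (by linarith) hkS ?_ ?_
  · refine ⟨s, hsub, le_trans ?_ hhalf⟩
    rw [mul_assoc, ← mul_div_assoc]
    gcongr
    exact exp_neg_mul_pow_le_pow ha hD₀ (by linarith) hsum hkM
  · calc _ ≤ (2 * M) ^ 2 * (1 / (4 * (2 * M) ^ 2)) := by
          gcongr
          exact hsq.trans (min_le_left _ _)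
      _ = 1 / 4 := by field_simp
  · calc _ ≤ 2 * M * (1 / (16 * (2 * M)) * log N) := by
          gcongr
          exact hmean.trans (by gcongr; exact min_le_right _ _)
      _ = log (N ^ (1 / 4 : ℝ)) / 4 := by rw [hlogz]; field_simp; norm_num

theorem HasMertensDensity.exists_le_card_factorSets (h : HasMertensDensity P κ) (hκ : 0 < κ)
    {A : ℝ} (hA : 0 < A) : ∃ C : ℝ, 0 < C ∧ ∀ᶠ N : ℝ in atTop, ∀ k : ℕ,
      k ≤ A * log (log N) →
        C * (N / log N) * (κ * log (log N)) ^ k / k ! ≤ #(factorSets P (k + 1) N) := by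
  obtain ⟨K, c, x₀, hK, hc, hx₀, hcount⟩ := h.exists_le_card_sdiff hκ
  obtain ⟨C, hC, hsum⟩ := h.exists_le_sum_prod_inv hκ hA
  refine ⟨c * C, by positivity, ?_⟩
  filter_upwards [hsum, (tendsto_rpow_atTop (y := 1 / 4) (by norm_num)).eventually_ge_atTop
    (max K x₀), eventually_gt_atTop 1] with N hs hz hN k hk
  obtain ⟨s, hsub, hle⟩ := hs k hk
  obtain ⟨hKz, hx₀z⟩ := max_le_iff.1 hz
  have hlog := log_pos hN
  have hKN : K * (N ^ (1 / 4 : ℝ)) ^ 2 ≤ N := by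
    calc K * (N ^ (1 / 4 : ℝ)) ^ 2 ≤ (N ^ (1 / 4 : ℝ)) ^ 2 * (N ^ (1 / 4 : ℝ)) ^ 2 := by
          gcongr
          exact hKz.trans (le_self_pow₀ (by linarith) two_ne_zero)
      _ = N := by
          rw [← pow_add, ← rpow_natCast, ← rpow_mul (by linarith)]
          norm_num
  calc _ = c * (N / log N) * (C * ((κ * log (log N)) ^ k / k !)) := by ring
    _ ≤ _ := mul_le_mul_of_nonneg_left hle (by positivity)
    _ ≤ _ := mul_sum_prod_inv_le_card_factorSets h.prime_of_mem hK hc.le hx₀ hcount hx₀z hKN hsub k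

end LowerBound

section CountingBounds

open Filter Finset Real

theorem count_PellDr_bounds_general {P : Set ℕ} {κ : ℝ} (h : HasMertensDensity P κ) (hκ : 0 < κ) :
    ∀ A : ℝ, 0 < A → ∃ C₁ C₂ N₀ : ℝ, 0 < C₁ ∧ 0 < C₂ ∧ 0 < N₀ ∧
      ∀ N : ℝ, N₀ ≤ N → ∀ r : ℕ, 1 ≤ r → (r : ℝ) ≤ A * log (log N) →
        C₁ * (N / log N) * (κ * log (log N)) ^ (r - 1) / (Nat.factorial (r - 1) : ℝ) ≤
          ((squarefreeProducts P r N).ncard : ℝ) ∧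
        ((squarefreeProducts P r N).ncard : ℝ) ≤
          C₂ * (N / log N) * (κ * log (log N)) ^ (r - 1) / (Nat.factorial (r - 1) : ℝ) := by
  intro A hA
  obtain ⟨C₁, hC₁, hlower⟩ := h.exists_le_card_factorSets hκ hA
  obtain ⟨C₂, hC₂, hupper⟩ := h.exists_card_factorSets_le hκ A
  obtain ⟨N₀, hN₀⟩ := eventually_atTop.1 (hlower.and hupper)
  refine ⟨C₁, C₂, max N₀ 1, hC₁, hC₂, by positivity, fun N hN r hr hrA ↦ ?_⟩
  obtain ⟨k, rfl⟩ := Nat.exists_eq_add_one.2 hr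
  have hk : (k : ℝ) ≤ A * log (log N) := (Nat.cast_le.2 k.le_succ).trans hrA
  obtain ⟨hlower, hupper⟩ := hN₀ N ((le_max_left _ _).trans hN)
  rw [ncard_squarefreeProducts h.prime_of_mem, Nat.add_sub_cancel]
  exact ⟨hlower k hk, hupper k hk⟩

lemma pellDr_eq_squarefreeProducts (r : ℕ) (N : ℝ) :
    PellDr r N = squarefreeProducts pellPrimes r N := by
  ext d
  simp only [PellDr, PellD, squarefreeProducts, pellPrimes, Set.mem_ofPred_eq]
  have hpos : Squarefree d → 0 < d := fun hd ↦ hd.ne_zero.bot_lt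
  grind

end CountingBounds

/-- Two-sided bounds of Landau type for `|𝒟_r(N)|`, uniformly in `r ≤ A log log N`. -/
theorem count_PellDr_bounds :
    ∀ A : ℝ, 0 < A → ∃ C₁ C₂ N₀ : ℝ, 0 < C₁ ∧ 0 < C₂ ∧ 0 < N₀ ∧
      ∀ N : ℝ, N₀ ≤ N → ∀ r : ℕ, 1 ≤ r → (r : ℝ) ≤ A * Real.log (Real.log N) →
        C₁ * (N / Real.log N) * ((1 / 2) * Real.log (Real.log N)) ^ (r - 1) /
            (Nat.factorial (r - 1) : ℝ) ≤ ((PellDr r N).ncard : ℝ) ∧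
        ((PellDr r N).ncard : ℝ) ≤
          C₂ * (N / Real.log N) * ((1 / 2) * Real.log (Real.log N)) ^ (r - 1) /
            (Nat.factorial (r - 1) : ℝ) := by
  simp_rw [pellDr_eq_squarefreeProducts]
  exact count_PellDr_bounds_general hasMertensDensity_pellPrimes one_half_pos
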